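/- Let F be the free group of rank 2. For every function α: ℕ ∪ {0} → ℕ of the form α(n) = Σ_{i=0}^{n} f_i, where f_0 = 1, each f_i is a positive integer (possibly eventually zero after some index r), and there exists d > 0 with f_{i+1} ≤ d·f_i for all i, there exists an essential subgroup H ≤ F (of infinite index when α is unbounded) such that the cogrowth function Γ_{F/H} is equivalent to α, i.e., ∃C with Γ_{F/H}(n) ≤ α(Cn) and α(n) ≤ Γ_{F/H}(Cn) for all n. -/

import Mathlib

/-- The ball of radius `n` in `G` with respect to the generating set `S`
(words of length at most `n` in `S ∪ S⁻¹`). -/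
def wordBall {G : Type*} [Group G] (S : Set G) (n : ℕ) : Set G :=
  {g | ∃ l : List G, l.length ≤ n ∧ (∀ x ∈ l, x ∈ S ∨ x⁻¹ ∈ S) ∧ l.prod = g}

/-- The word length of `g` with respect to the generating set `S`. -/
noncomputable def wordLength {G : Type*} [Group G] (S : Set G) (g : G) : ℕ :=
  sInf {n | g ∈ wordBall S n}

/-- The growth function of `G` with respect to `S`. -/
noncomputable def growth {G : Type*} [Group G] (S : Set G) (n : ℕ) : ℕ :=
  (wordBall S n).ncard

/-- The cogrowth function of a subgroup `H ≤ G`: the number of right cosets `Hg`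
containing an element of word length at most `n`. -/
noncomputable def cogrowth {G : Type*} [Group G] (S : Set G) (H : Subgroup G) (n : ℕ) : ℕ :=
  ((fun g => Quotient.mk (QuotientGroup.rightRel H) g) '' wordBall S n).ncard

/-- A subgroup is essential if it intersects every nontrivial subgroup nontrivially. -/
def Essential {G : Type*} [Group G] (H : Subgroup G) : Prop :=
  ∀ K : Subgroup G, K ≠ ⊥ → H ⊓ K ≠ ⊥

section WordBall

variable {G : Type*} [Group G] {S : Set G}

theorem one_mem_wordBall (n : ℕ) : (1 : G) ∈ wordBall S n :=
  ⟨[], by simp, by simp, rfl⟩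

theorem wordBall_mono {m n : ℕ} (h : m ≤ n) : wordBall S m ⊆ wordBall S n :=
  fun _ ⟨l, hl, hS, hg⟩ => ⟨l, hl.trans h, hS, hg⟩

theorem mul_mem_wordBall {m n : ℕ} {g g' : G} (hg : g ∈ wordBall S m)
    (hg' : g' ∈ wordBall S n) : g * g' ∈ wordBall S (m + n) := by
  obtain ⟨l, hl, hS, rfl⟩ := hg
  obtain ⟨l', hl', hS', rfl⟩ := hg'
  refine ⟨l ++ l', by simp; omega, fun x hx => ?_, by simp⟩
  rcases List.mem_append.1 hx with h | h
  exacts [hS x h, hS' x h]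

theorem inv_mem_wordBall {n : ℕ} {g : G} (hg : g ∈ wordBall S n) : g⁻¹ ∈ wordBall S n := by
  obtain ⟨l, hl, hS, rfl⟩ := hg
  refine ⟨(l.map (·⁻¹)).reverse, by simpa using hl, fun x hx => ?_, l.prod_inv_reverse.symm⟩
  obtain ⟨y, hy, rfl⟩ : ∃ y ∈ l, y⁻¹ = x := by simpa using hx
  simpa using (hS y hy).symm

theorem letter_mem_wordBall {x : G} (hx : x ∈ S ∨ x⁻¹ ∈ S) : x ∈ wordBall S 1 :=
  ⟨[x], by simp, by simpa using hx, by simp⟩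

theorem pow_mem_wordBall {x : G} (hx : x ∈ S) (n : ℕ) : x ^ n ∈ wordBall S n :=
  ⟨List.replicate n x, by simp, fun y hy => .inl (List.eq_of_mem_replicate hy ▸ hx), by simp⟩

theorem exists_mem_wordBall (hS : Subgroup.closure S = ⊤) (g : G) : ∃ n, g ∈ wordBall S n := by
  have hg : g ∈ Subgroup.closure S := hS ▸ Subgroup.mem_top g
  induction hg using Subgroup.closure_induction with
  | mem x hx => exact ⟨1, letter_mem_wordBall (.inl hx)⟩
  | one => exact ⟨0, one_mem_wordBall 0⟩
  | mul x y _ _ hx hy =>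
    obtain ⟨m, hm⟩ := hx
    obtain ⟨n, hn⟩ := hy
    exact ⟨m + n, mul_mem_wordBall hm hn⟩
  | inv x _ hx =>
    obtain ⟨m, hm⟩ := hx
    exact ⟨m, inv_mem_wordBall hm⟩

theorem finite_wordBall (hS : S.Finite) (n : ℕ) : (wordBall S n).Finite := by
  let A : Set G := S ∪ S⁻¹
  have hA : A.Finite := hS.union hS.inv
  have : Finite A := hA
  refine ((List.finite_length_le A n).image fun l => (l.map Subtype.val).prod).subset ?_
  rintro g ⟨l, hl, hlS, rfl⟩
  refine ⟨l.attach.map fun x => ⟨x.1, by simpa [A] using hlS x.1 x.2⟩, by simpa using hl, ?_⟩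
  simp [List.map_map, Function.comp_def]

/-- The cogrowth of a point stabilizer is the growth of balls in the orbit of the point. -/
theorem cogrowth_comap_stabilizer {X : Type*} (ρ : G →* Equiv.Perm X) (o : X) (n : ℕ) :
    cogrowth S ((MulAction.stabilizer (Equiv.Perm X) o).comap ρ) n =
      ((fun g => ρ g o) '' wordBall S n).ncard := by
  set H := (MulAction.stabilizer (Equiv.Perm X) o).comap ρ
  let F : Quotient (QuotientGroup.rightRel H) → X :=
    Quotient.lift (fun g => ρ g⁻¹ o) fun a b hab => by
      have h : ρ (b * a⁻¹) o = o := QuotientGroup.rightRel_apply.1 hab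
      simp only [map_mul, Equiv.Perm.mul_apply] at h
      rw [map_inv ρ b, Equiv.Perm.eq_inv_iff_eq, h]
  have hF : Function.Injective F := by
    rintro ⟨a⟩ ⟨b⟩ hab
    refine Quotient.sound (QuotientGroup.rightRel_apply.2 (?_ : ρ (b * a⁻¹) o = o))
    have h : ρ a⁻¹ o = ρ b⁻¹ o := hab
    rw [map_mul, Equiv.Perm.mul_apply, h, ← Equiv.Perm.mul_apply, ← map_mul]
    simp
  rw [cogrowth, ← Set.ncard_image_of_injective _ hF, Set.image_image]
  congr 1
  ext x
  constructor
  · rintro ⟨g, hg, rfl⟩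
    exact ⟨g⁻¹, inv_mem_wordBall hg, rfl⟩
  · rintro ⟨g, hg, rfl⟩
    exact ⟨g⁻¹, inv_mem_wordBall hg, by simp [F]⟩

end WordBall

/-- A map with fibers of size at most `D` has a fiberwise cyclic permutation of its domain. -/
theorem exists_perm_transitive_on_fibers {Y Z : Type*} (p : Y → Z) (D : ℕ)
    (hp : ∀ z, {y | p y = z}.Finite ∧ {y | p y = z}.ncard ≤ D) :
    ∃ c : Equiv.Perm Y, (∀ y, p (c y) = p y) ∧
      ∀ y y', p y = p y' → ∃ m ≤ D, (c ^ m) y = y' := by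
  classical
  choose F hF using fun z => (hp z).1.countable.exists_cycleOn
  have hfib (z : Z) (y : Y) : p (F z y) = z ↔ p y = z := by
    simpa using (hF z).1.apply_mem_iff (x := y)
  have hfib' (z : Z) (y : Y) : p ((F z).symm y) = z ↔ p y = z := by
    rw [← hfib, Equiv.apply_symm_apply]
  let c : Equiv.Perm Y :=
    { toFun := fun y => F (p y) y
      invFun := fun y => (F (p y)).symm y
      left_inv := fun y => by simp [(hfib (p y) y).2 rfl]
      right_inv := fun y => by simp [(hfib' (p y) y).2 rfl] }
  have hc (y : Y) : c y = F (p y) y := rfl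
  have hpc (y : Y) : p (c y) = p y := (hfib _ _).2 rfl
  have hpow (y : Y) (m : ℕ) : p ((c ^ m) y) = p y ∧ (c ^ m) y = (F (p y) ^ m) y := by
    induction m with
    | zero => simp
    | succ m ih =>
      rw [pow_succ', pow_succ', Equiv.Perm.mul_apply, Equiv.Perm.mul_apply, hpc]
      exact ⟨ih.1, by rw [hc, ih.1, ih.2]⟩
  refine ⟨c, hpc, fun y y' h => ?_⟩
  have hcyc : (F (p y)).IsCycleOn ((hp (p y)).1.toFinset : Set Y) := by
    simpa using (hF (p y)).1
  obtain ⟨m, hm, hmy⟩ := hcyc.exists_pow_eq (a := y) (b := y') (by simp) (by simp [h])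
  refine ⟨m, ?_, (hpow y m).2.trans hmy⟩
  rw [← Set.ncard_eq_toFinset_card _ (hp (p y)).1] at hm
  exact hm.le.trans (hp _).2

/-- If `σ` agrees with `τ` along the `τ`-orbit of `z` except possibly at `u`, then the `σ`-orbit
of `z` reaches `u` as soon as the `τ`-orbit does. -/
theorem exists_pow_apply_eq_of_agree {Y : Type*} {σ τ : Equiv.Perm Y} {u : Y} (n : ℕ) (z : Y)
    (hn : (τ ^ n) z = u) (h : ∀ m, (τ ^ m) z ≠ u → σ ((τ ^ m) z) = τ ((τ ^ m) z)) :
    ∃ m ≤ n, (σ ^ m) z = u := by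
  induction n generalizing z with
  | zero => exact ⟨0, le_rfl, hn⟩
  | succ n ih =>
    by_cases hz : z = u
    · exact ⟨0, Nat.zero_le _, hz⟩
    have hσ : σ z = τ z := h 0 hz
    obtain ⟨m, hm, hmz⟩ := ih (τ z) (by rwa [pow_succ] at hn) fun m hm => by
      have := h (m + 1)
      rw [pow_succ, Equiv.Perm.mul_apply] at this
      exact this hm
    exact ⟨m + 1, by omega, by rw [pow_succ, Equiv.Perm.mul_apply, hσ, hmz]⟩

/-- A point whose orbit under a permutation is confined to a finite set is periodic. -/
theorem exists_pow_apply_eq_self_of_mapsTo {Y : Type*} (σ : Equiv.Perm Y) {s : Set Y}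
    (hs : s.Finite) (h : Set.MapsTo σ s s) {o : Y} (ho : o ∈ s) :
    ∃ m, 0 < m ∧ (σ ^ m) o = o := by
  have hmem (n : ℕ) : (σ ^ n) o ∈ s := by
    induction n with
    | zero => exact ho
    | succ n ih => rw [pow_succ']; exact h ih
  have : Finite s := hs
  obtain ⟨i, j, hne, hij⟩ :=
    Finite.exists_ne_map_eq_of_infinite fun n : ℕ => (⟨(σ ^ n) o, hmem n⟩ : s)
  wlog hlt : i < j generalizing i j
  · exact this j i hne.symm hij.symm (by omega)
  have hij' : (σ ^ i) o = (σ ^ j) o := congrArg Subtype.val hij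
  refine ⟨j - i, by omega, (σ ^ i).injective ?_⟩
  rw [← Equiv.Perm.mul_apply, ← pow_add, Nat.add_sub_cancel' hlt.le, hij']

/-- Data for a rooted tree of groups: level `i` has `f i` vertices, each vertex has at most `d`
children, and every vertex of level `i` carries a copy of the finite quotient `Q i` of the free
group, entered at `1` and left at `exit i`. -/
structure GroupTree where
  f : ℕ → ℕ
  d : ℕ
  f_succ_le : ∀ i, f (i + 1) ≤ d * f i
  Q : ℕ → Type
  [group : ∀ i, Group (Q i)]
  [finite : ∀ i, Finite (Q i)]
  φ : ∀ i, FreeGroup Bool →* Q i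
  exit : ∀ i, Q i
  exit_mem : ∀ i, ∃ x, exit i ∈ Subgroup.zpowers (φ i (FreeGroup.of x))

namespace GroupTree

attribute [instance] group finite

variable (T : GroupTree)

/-- The points of the union of all copies of the groups `Q i`. -/
abbrev Point := Σ i, Fin (T.f i) × T.Q i

/-- The parent of a vertex of level `i + 1`. -/
def parent (i : ℕ) (v : Fin (T.f (i + 1))) : Fin (T.f i) :=
  ⟨v / T.d, Nat.div_lt_of_lt_mul (v.2.trans_le (T.f_succ_le i))⟩

open Classical in
/-- For levels `i` of parity `x`, identify the entries at level `i + 1` with the exit of their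
parent. -/
noncomputable def glue (x : Bool) : T.Point → T.Point
  | ⟨0, y⟩ => ⟨0, y⟩
  | ⟨i + 1, (v, z)⟩ =>
    if z = 1 ∧ i.bodd = x then ⟨i, (T.parent i v, T.exit i)⟩ else ⟨i + 1, (v, z)⟩

/-- The exits of level `i` and the entries of level `i + 1`. -/
def IsPort (i : ℕ) (y : T.Point) : Prop :=
  (y.1 = i ∧ y.2.2 = T.exit y.1) ∨ (y.1 = i + 1 ∧ y.2.2 = 1)

variable {T}

theorem glue_cases (x : Bool) (y : T.Point) :
    T.glue x y = y ∨ ∃ (i : ℕ) (v : Fin (T.f (i + 1))), i.bodd = x ∧ y = ⟨i + 1, (v, 1)⟩ ∧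
      T.glue x y = ⟨i, (T.parent i v, T.exit i)⟩ := by
  obtain ⟨_ | i, v, z⟩ := y
  · exact .inl rfl
  · by_cases h : z = 1 ∧ i.bodd = x
    · exact .inr ⟨i, v, h.2, by rw [h.1], by simp [glue, h]⟩
    · exact .inl (by simp [glue, h])

theorem glue_entry (i : ℕ) (v : Fin (T.f (i + 1))) :
    T.glue i.bodd ⟨i + 1, (v, 1)⟩ = ⟨i, (T.parent i v, T.exit i)⟩ := by
  simp [glue]

theorem glue_exit (i : ℕ) (v : Fin (T.f i)) :
    T.glue i.bodd ⟨i, (v, T.exit i)⟩ = ⟨i, (v, T.exit i)⟩ := by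
  rcases T.glue_cases i.bodd ⟨i, (v, T.exit i)⟩ with h | ⟨j, w, hj, hy, -⟩
  · exact h
  · obtain rfl : i = j + 1 := congrArg Sigma.fst hy
    simp at hj

theorem eq_or_isPort_of_glue_eq {x : Bool} {y y' : T.Point} (h : T.glue x y = T.glue x y') :
    y = y' ∨ ∃ i : ℕ, i.bodd = x ∧ T.IsPort i y ∧ T.IsPort i y' := by
  rcases T.glue_cases x y with hy | ⟨i, v, hi, rfl, hy⟩ <;>
    rcases T.glue_cases x y' with hy' | ⟨i', v', hi', rfl, hy'⟩
  · exact .inl (by rw [← hy, h, hy'])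
  · obtain rfl := hy.symm.trans (h.trans hy')
    exact .inr ⟨i', hi', .inl ⟨rfl, rfl⟩, .inr ⟨rfl, rfl⟩⟩
  · obtain rfl := hy'.symm.trans (h.symm.trans hy)
    exact .inr ⟨i, hi, .inr ⟨rfl, rfl⟩, .inl ⟨rfl, rfl⟩⟩
  · obtain rfl : i = i' := congrArg Sigma.fst (hy.symm.trans (h.trans hy'))
    exact .inr ⟨i, hi, .inr ⟨rfl, rfl⟩, .inr ⟨rfl, rfl⟩⟩

theorem glue_fiber (x : Bool) (z : T.Point) :
    {y | T.glue x y = z}.Finite ∧ {y | T.glue x y = z}.ncard ≤ T.d + 1 := by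
  let F : T.Point → ℕ := fun y => if y.1 = z.1 then T.d else y.2.1 % T.d
  have hmaps : Set.MapsTo F {y | T.glue x y = z} (Finset.range (T.d + 1)) := by
    intro y hy
    simp only [Finset.coe_range, Set.mem_Iio, F]
    split_ifs
    · omega
    · rcases T.glue_cases x y with h | ⟨i, v, -, rfl, -⟩
      · exact absurd (congrArg Sigma.fst (h.symm.trans hy)) ‹_›
      · have : 0 < T.d := Nat.pos_of_ne_zero fun h0 => by
          have := v.2.trans_le (T.f_succ_le i)
          simp [h0] at this
        exact (Nat.mod_lt _ this).trans (Nat.lt_succ_self _)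
  have hinj : Set.InjOn F {y | T.glue x y = z} := by
    intro y hy y' hy' hF
    have hlt (i : ℕ) (v : Fin (T.f (i + 1))) : v % T.d ≠ T.d := fun h0 => by
      have h1 := v.2.trans_le (T.f_succ_le i)
      rcases Nat.eq_zero_or_pos T.d with hd | hd
      · simp [hd] at h1
      · exact (Nat.mod_lt v hd).ne h0
    rcases T.glue_cases x y with h | ⟨i, v, -, rfl, h⟩ <;>
      rcases T.glue_cases x y' with h' | ⟨i', v', -, rfl, h'⟩
    · exact h.symm.trans (hy.trans (hy'.symm.trans h'))
    · obtain rfl := h.symm.trans hy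
      obtain rfl := h'.symm.trans hy'
      exact absurd (by simpa [F] using hF.symm) (hlt _ v')
    · obtain rfl := h'.symm.trans hy'
      obtain rfl := h.symm.trans hy
      exact absurd (by simpa [F] using hF) (hlt _ v)
    · have hz := h.symm.trans (hy.trans (hy'.symm.trans h'))
      obtain rfl : i = i' := congrArg Sigma.fst hz
      obtain rfl := h.symm.trans hy
      have hpar : T.parent i v = T.parent i v' := by simpa using hz
      have hdiv : (v : ℕ) / T.d = v' / T.d := congrArg Fin.val hpar
      have hmod : (v : ℕ) % T.d = v' % T.d := by simpa [F] using hF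
      have : v = v' := Fin.ext (by rw [← Nat.div_add_mod v T.d, hdiv, hmod, Nat.div_add_mod])
      rw [this]
  refine ⟨Set.Finite.of_injOn hmaps hinj (Finset.finite_toSet _), ?_⟩
  simpa using Set.ncard_le_ncard_of_injOn F hmaps hinj (Finset.finite_toSet _)

variable (T) in
/-- A permutation that cyclically permutes each exit together with the entries glued to it. -/
noncomputable def portPerm (x : Bool) : Equiv.Perm T.Point :=
  (exists_perm_transitive_on_fibers (T.glue x) (T.d + 1) (T.glue_fiber x)).choose

theorem glue_portPerm (x : Bool) (y : T.Point) : T.glue x (T.portPerm x y) = T.glue x y :=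
  (exists_perm_transitive_on_fibers (T.glue x) (T.d + 1) (T.glue_fiber x)).choose_spec.1 y

theorem exists_portPerm_pow {x : Bool} {y y' : T.Point} (h : T.glue x y = T.glue x y') :
    ∃ m ≤ T.d + 1, (T.portPerm x ^ m) y = y' :=
  (exists_perm_transitive_on_fibers (T.glue x) (T.d + 1) (T.glue_fiber x)).choose_spec.2 y y' h

theorem portPerm_cases (x : Bool) (y : T.Point) : T.portPerm x y = y ∨
    ∃ i : ℕ, i.bodd = x ∧ T.IsPort i (T.portPerm x y) ∧ T.IsPort i y :=
  eq_or_isPort_of_glue_eq (glue_portPerm x y)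

theorem portPerm_inv_cases (x : Bool) (y : T.Point) : (T.portPerm x)⁻¹ y = y ∨
    ∃ i : ℕ, i.bodd = x ∧ T.IsPort i ((T.portPerm x)⁻¹ y) ∧ T.IsPort i y :=
  eq_or_isPort_of_glue_eq (by
    have := glue_portPerm x ((T.portPerm x)⁻¹ y)
    rw [← Equiv.Perm.mul_apply, mul_inv_cancel, Equiv.Perm.one_apply] at this
    exact this.symm)

variable (T) in
/-- The action of the free group on the disjoint union of the groups `Q i`. -/
def translation : FreeGroup Bool →* Equiv.Perm T.Point where
  toFun g :=
    { toFun := fun y => ⟨y.1, (y.2.1, T.φ y.1 g * y.2.2)⟩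
      invFun := fun y => ⟨y.1, (y.2.1, (T.φ y.1 g)⁻¹ * y.2.2)⟩
      left_inv := fun y => by simp
      right_inv := fun y => by simp }
  map_one' := by ext y <;> simp
  map_mul' g g' := by ext y <;> simp [mul_assoc]

theorem translation_apply (g : FreeGroup Bool) (y : T.Point) :
    T.translation g y = ⟨y.1, (y.2.1, T.φ y.1 g * y.2.2)⟩ := rfl

variable (T) in
/-- The action of the free group on the tree of groups. -/
noncomputable def action : FreeGroup Bool →* Equiv.Perm T.Point :=
  FreeGroup.lift fun x => T.translation (FreeGroup.of x) * T.portPerm x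

theorem action_of (x : Bool) (y : T.Point) :
    T.action (FreeGroup.of x) y = T.translation (FreeGroup.of x) (T.portPerm x y) := by
  simp [action]

theorem action_of_inv (x : Bool) (y : T.Point) :
    T.action (FreeGroup.of x)⁻¹ y = (T.portPerm x)⁻¹ (T.translation (FreeGroup.of x)⁻¹ y) := by
  rw [action, map_inv, FreeGroup.lift_apply_of, mul_inv_rev, map_inv]
  rfl

end GroupTree

/-- The standard basis of the free group of rank two. -/
abbrev freeBasis : Set (FreeGroup Bool) := {FreeGroup.of true, FreeGroup.of false}

theorem of_mem_freeBasis (x : Bool) : FreeGroup.of x ∈ freeBasis := by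
  cases x <;> simp

theorem exists_of_mem_freeBasis {g : FreeGroup Bool} (hg : g ∈ freeBasis ∨ g⁻¹ ∈ freeBasis) :
    ∃ x, g = FreeGroup.of x ∨ g = (FreeGroup.of x)⁻¹ := by
  rcases hg with (h | h) | (h | h)
  · exact ⟨true, .inl h⟩
  · exact ⟨false, .inl h⟩
  · exact ⟨true, .inr (inv_eq_iff_eq_inv.1 h)⟩
  · exact ⟨false, .inr (inv_eq_iff_eq_inv.1 h)⟩

theorem closure_freeBasis : Subgroup.closure freeBasis = ⊤ := by
  rw [eq_top_iff, ← FreeGroup.closure_range_of]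
  refine Subgroup.closure_mono ?_
  rintro _ ⟨x, rfl⟩
  exact of_mem_freeBasis x

namespace GroupTree

variable {T : GroupTree}

theorem IsPort.level_le {i : ℕ} {y : T.Point} (h : T.IsPort i y) : y.1 ≤ i + 1 := by
  rcases h with h | h <;> omega

theorem IsPort.le_level {i : ℕ} {y : T.Point} (h : T.IsPort i y) : i ≤ y.1 := by
  rcases h with h | h <;> omega

theorem action_letter_level_le {g : FreeGroup Bool} (hg : g ∈ freeBasis ∨ g⁻¹ ∈ freeBasis)
    (y : T.Point) : (T.action g y).1 ≤ y.1 + 1 := by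
  obtain ⟨x, rfl | rfl⟩ := exists_of_mem_freeBasis hg
  · rw [action_of, translation_apply]
    rcases portPerm_cases x y with h | ⟨i, -, h, h'⟩
    · simp [h]
    · exact h.level_le.trans (Nat.succ_le_succ h'.le_level)
  · rw [action_of_inv]
    rcases portPerm_inv_cases x (T.translation (FreeGroup.of x)⁻¹ y) with h | ⟨i, -, h, h'⟩
    · rw [h]
      exact Nat.le_succ _
    · exact h.level_le.trans (Nat.succ_le_succ h'.le_level)

theorem action_level_le {n : ℕ} {g : FreeGroup Bool} (hg : g ∈ wordBall freeBasis n)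
    (y : T.Point) : (T.action g y).1 ≤ y.1 + n := by
  obtain ⟨l, hl, hS, rfl⟩ := hg
  refine le_trans ?_ (Nat.add_le_add_left hl _)
  clear hl
  induction l with
  | nil => simp
  | cons a l ih =>
    rw [List.prod_cons, map_mul, Equiv.Perm.mul_apply, List.length_cons]
    have := action_letter_level_le (hS a (by simp)) (T.action l.prod y)
    have := ih fun x hx => hS x (by simp [hx])
    omega

section Barrier

variable (T) in
/-- The point `y` lies before level `N`, or in level `N` within distance `m` of the entry. -/
def Near (N m : ℕ) (y : T.Point) : Prop :=
  y.1 < N ∨ (y.1 = N ∧ ∃ g ∈ wordBall freeBasis m, y.2.2 = T.φ y.1 g)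

theorem Near.mono {N m n : ℕ} (h : m ≤ n) {y : T.Point} (hy : T.Near N m y) : T.Near N n y := by
  rcases hy with hy | ⟨hy, g, hg, h'⟩
  exacts [.inl hy, .inr ⟨hy, g, wordBall_mono h hg, h'⟩]

theorem near_of_isPort {N i : ℕ} {y y' : T.Point} (hy : y.1 < N ∨ (y.1 = N ∧ y.2.2 ≠ T.exit y.1))
    (h : T.IsPort i y) (h' : T.IsPort i y') : T.Near N 0 y' := by
  have hi : i + 1 ≤ N := by
    rcases h with ⟨h1, h2⟩ | ⟨h1, h2⟩ <;> rcases hy with hy | ⟨hy, hne⟩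
    · omega
    · exact absurd h2 hne
    · omega
    · omega
  rcases h' with ⟨h1, h2⟩ | ⟨h1, h2⟩
  · exact .inl (by omega)
  · rcases hi.lt_or_eq with hlt | rfl
    · exact .inl (by omega)
    · exact .inr ⟨h1, 1, one_mem_wordBall 0, by simp [h2]⟩

theorem Near.translation {N m n : ℕ} {y : T.Point} (hy : T.Near N m y) {a : FreeGroup Bool}
    (ha : a ∈ wordBall freeBasis n) : T.Near N (n + m) (T.translation a y) := by
  rcases hy with hy | ⟨hy, g, hg, h⟩
  · exact .inl hy
  · exact .inr ⟨hy, a * g, mul_mem_wordBall ha hg,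
      (congrArg (T.φ y.1 a * ·) h).trans (map_mul _ _ _).symm⟩

/-- A letter moves a point that is not near the exit by translation or to the vicinity of the
entry. -/
theorem action_letter_near {N m M : ℕ} (hM : ∀ g ∈ wordBall freeBasis M, T.φ N g ≠ T.exit N)
    (hm : m + 1 ≤ M) {a : FreeGroup Bool} (ha : a ∈ freeBasis ∨ a⁻¹ ∈ freeBasis) {y : T.Point}
    (hy : T.Near N m y) :
    T.action a y = T.translation a y ∨ T.Near N 1 (T.action a y) := by
  have hne {n : ℕ} (hn : n ≤ M) {y : T.Point} (hy : T.Near N n y) :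
      y.1 < N ∨ (y.1 = N ∧ y.2.2 ≠ T.exit y.1) := by
    rcases hy with hy | ⟨rfl, g, hg, h⟩
    · exact .inl hy
    · exact .inr ⟨rfl, h ▸ hM g (wordBall_mono hn hg)⟩
  obtain ⟨x, rfl | rfl⟩ := exists_of_mem_freeBasis ha
  · rw [action_of]
    rcases portPerm_cases x y with h | ⟨i, -, h', h⟩
    · exact .inl (by rw [h])
    · exact .inr ((near_of_isPort (hne (by omega) hy) h h').translation (letter_mem_wordBall ha))
  · rw [action_of_inv]
    rcases portPerm_inv_cases x (T.translation (FreeGroup.of x)⁻¹ y) with h | ⟨i, -, h', h⟩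
    · exact .inl h
    · exact .inr ((near_of_isPort (hne (by omega) (hy.translation (letter_mem_wordBall ha)))
        h h').mono zero_le_one)

theorem action_near {N m M : ℕ} (hM : ∀ g ∈ wordBall freeBasis M, T.φ N g ≠ T.exit N)
    {y : T.Point} (hy : T.Near N m y) (l : List (FreeGroup Bool)) (hl : l.length + m ≤ M)
    (hS : ∀ a ∈ l, a ∈ freeBasis ∨ a⁻¹ ∈ freeBasis) :
    T.action l.prod y = T.translation l.prod y ∨ T.Near N l.length (T.action l.prod y) := by
  induction l with
  | nil => simp
  | cons a l ih =>
    rw [List.length_cons] at hl ⊢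
    have hlS : ∀ a ∈ l, a ∈ freeBasis ∨ a⁻¹ ∈ freeBasis := fun x hx => hS x (by simp [hx])
    have ha := hS a (by simp)
    have hball : l.prod ∈ wordBall freeBasis l.length := ⟨l, le_rfl, hlS, rfl⟩
    simp only [List.prod_cons, map_mul, Equiv.Perm.mul_apply]
    rcases ih (by omega) hlS with h | h
    · rw [h]
      exact (action_letter_near hM (by omega) ha (hy.translation hball)).imp id
        (Near.mono (by omega))
    · rcases action_letter_near hM (by omega) ha h with h' | h'
      · rw [h', add_comm]
        exact .inr (h.translation (letter_mem_wordBall ha))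
      · exact .inr (h'.mono (by omega))

theorem finite_setOf_level_le (n : ℕ) : {y : T.Point | y.1 ≤ n}.Finite := by
  have : {y : T.Point | y.1 ≤ n} = ⋃ i ∈ Finset.range (n + 1), Set.range (Sigma.mk i) := by
    ext ⟨i, y⟩
    simp only [Set.mem_ofPred_eq, Set.mem_iUnion, Finset.mem_range, Set.mem_range]
    constructor
    · exact fun h => ⟨i, by omega, y, rfl⟩
    · rintro ⟨j, hj, z, hz⟩
      have : j = i := congrArg Sigma.fst hz
      omega
  rw [this]
  exact Set.Finite.biUnion (Finset.finite_toSet _) fun i _ => Set.finite_range _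

/-- If the group at level `N` kills `w` and has its exit far from its entry, then `w` has finite
orbits on the points before level `N` and on the entries of level `N`. -/
theorem exists_pow_action_eq_self {N r : ℕ} {w : FreeGroup Bool} (hw : w ∈ wordBall freeBasis r)
    (hφ : T.φ N w = 1) (hexit : ∀ g ∈ wordBall freeBasis (2 * r), T.φ N g ≠ T.exit N)
    {o : T.Point} (ho : T.Near N 0 o) : ∃ m, 0 < m ∧ T.action (w ^ m) o = o := by
  simp only [map_pow]
  refine exists_pow_apply_eq_self_of_mapsTo (T.action w) (s := {y | T.Near N r y}) ?_ ?_
    (ho.mono (Nat.zero_le r))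
  · refine (finite_setOf_level_le N).subset ?_
    rintro y (hy | ⟨hy, -⟩)
    exacts [hy.le, hy.le]
  · intro y hy
    obtain ⟨l, hl, hS, rfl⟩ := hw
    rcases action_near hexit hy l (by omega) hS with h | h
    · rw [Set.mem_ofPred_eq, h]
      rcases hy with hy | ⟨rfl, g, hg, hy⟩
      · exact .inl hy
      · exact .inr ⟨rfl, g, hg, by
          rw [translation_apply, ← hy]
          exact (congrArg (· * y.2.2) hφ).trans (one_mul _)⟩
    · exact h.mono hl

end Barrier

section Reach

variable (T) in
/-- The point `y'` is reached from `y` in at most `n` steps. -/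
def Reach (n : ℕ) (y y' : T.Point) : Prop :=
  ∃ g ∈ wordBall freeBasis n, T.action g y = y'

theorem Reach.refl (n : ℕ) (y : T.Point) : T.Reach n y y :=
  ⟨1, one_mem_wordBall n, by simp⟩

theorem Reach.mono {m n : ℕ} (h : m ≤ n) {y y' : T.Point} (hy : T.Reach m y y') :
    T.Reach n y y' := by
  obtain ⟨g, hg, rfl⟩ := hy
  exact ⟨g, wordBall_mono h hg, rfl⟩

theorem Reach.trans {m n : ℕ} {y₁ y₂ y₃ : T.Point} (h : T.Reach m y₁ y₂) (h' : T.Reach n y₂ y₃) :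
    T.Reach (m + n) y₁ y₃ := by
  obtain ⟨g, hg, rfl⟩ := h
  obtain ⟨g', hg', rfl⟩ := h'
  exact ⟨g' * g, add_comm m n ▸ mul_mem_wordBall hg' hg, by simp⟩

theorem Reach.symm {n : ℕ} {y y' : T.Point} (h : T.Reach n y y') : T.Reach n y' y := by
  obtain ⟨g, hg, rfl⟩ := h
  exact ⟨g⁻¹, inv_mem_wordBall hg, by simp⟩

open Classical in
variable (T) in
/-- The element of `Q i` moved by `portPerm x`. -/
noncomputable def port (x : Bool) (i : ℕ) : T.Q i := if i.bodd = x then T.exit i else 1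

theorem IsPort.eq_port {i : ℕ} {y : T.Point} (h : T.IsPort i y) :
    y.2.2 = T.port i.bodd y.1 := by
  obtain ⟨j, v, z⟩ := y
  rcases h with ⟨h1, h2⟩ | ⟨h1, h2⟩
  · obtain rfl : j = i := h1
    simpa [port] using h2
  · obtain rfl : j = i + 1 := h1
    simpa [port] using h2

theorem translation_pow_apply (g : FreeGroup Bool) (m : ℕ) (y : T.Point) :
    (T.translation g ^ m) y = ⟨y.1, (y.2.1, T.φ y.1 g ^ m * y.2.2)⟩ := by
  rw [← map_pow, translation_apply, map_pow]

theorem reach_port {i : ℕ} (x : Bool) (v : Fin (T.f i)) {z : T.Q i} {k : ℕ}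
    (hk : T.φ i (FreeGroup.of x) ^ k * z = T.port x i) :
    T.Reach (Nat.card (T.Q i)) ⟨i, (v, z)⟩ ⟨i, (v, T.port x i)⟩ := by
  set a := T.φ i (FreeGroup.of x)
  obtain ⟨m, hm, h⟩ := exists_pow_apply_eq_of_agree (σ := T.action (FreeGroup.of x))
    (τ := T.translation (FreeGroup.of x)) (u := ⟨i, (v, T.port x i)⟩) (k % orderOf a)
    ⟨i, (v, z)⟩ (by rw [translation_pow_apply]; simp [a, ← hk]) (by
      intro m hne
      rw [action_of]
      rcases portPerm_cases x ((T.translation (FreeGroup.of x) ^ m) ⟨i, (v, z)⟩) with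
        h | ⟨j, rfl, -, h⟩
      · rw [h]
      · have := h.eq_port
        rw [translation_pow_apply] at this hne
        exact absurd (by simpa using this) hne)
  refine ⟨FreeGroup.of x ^ m, wordBall_mono ?_ (pow_mem_wordBall (of_mem_freeBasis x) m),
    by rw [map_pow, h]⟩
  exact hm.trans ((Nat.mod_lt _ (orderOf_pos a)).le.trans orderOf_le_card)

theorem reach_exit (i : ℕ) (v : Fin (T.f i)) :
    T.Reach (Nat.card (T.Q i)) ⟨i, (v, 1)⟩ ⟨i, (v, T.exit i)⟩ := by
  obtain ⟨x, hx⟩ := T.exit_mem i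
  by_cases h : i.bodd = x
  · obtain ⟨k, hk⟩ := mem_powers_iff_mem_zpowers.2 hx
    have hp : T.port x i = T.exit i := by simp [port, h]
    have := reach_port x v (z := 1) (k := k) (by simpa [hp] using hk)
    rwa [hp] at this
  · obtain ⟨k, hk⟩ := mem_powers_iff_mem_zpowers.2 (inv_mem hx)
    have hp : T.port x i = 1 := by simp [port, h]
    have := reach_port x v (z := T.exit i) (k := k) (by rw [hp]; simpa using congrArg (· * T.exit i) hk)
    rw [hp] at this
    exact this.symm

theorem reach_portPerm (x : Bool) (y : T.Point) :
    T.Reach (1 + Nat.card (T.Q (T.portPerm x y).1)) y (T.portPerm x y) := by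
  rcases portPerm_cases x y with h | ⟨i, rfl, h, -⟩
  · rw [h]
    exact .refl _ y
  · have hp := h.eq_port
    have hstep : T.Reach 1 y (T.translation (FreeGroup.of i.bodd) (T.portPerm i.bodd y)) :=
      ⟨_, letter_mem_wordBall (.inl (of_mem_freeBasis _)), action_of _ _⟩
    generalize T.portPerm i.bodd y = y' at *
    obtain ⟨j, v, z⟩ := y'
    obtain rfl : z = T.port i.bodd j := hp
    refine hstep.trans (reach_port _ _ (k := orderOf (T.φ j (FreeGroup.of i.bodd)) - 1) ?_)
    rw [← mul_assoc, ← pow_succ, Nat.sub_add_cancel (orderOf_pos _), pow_orderOf_eq_one, one_mul]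

theorem reach_entry (i : ℕ) (v : Fin (T.f (i + 1))) :
    T.Reach ((T.d + 1) * (1 + (Nat.card (T.Q i) + Nat.card (T.Q (i + 1)))))
      ⟨i, (T.parent i v, T.exit i)⟩ ⟨i + 1, (v, 1)⟩ := by
  set y : T.Point := ⟨i, (T.parent i v, T.exit i)⟩ with hy
  have hglue (m : ℕ) : T.glue i.bodd ((T.portPerm i.bodd ^ m) y) = y := by
    induction m with
    | zero => exact glue_exit i _
    | succ m ih => rw [pow_succ', Equiv.Perm.mul_apply, glue_portPerm, ih]
  have hcard (m : ℕ) : Nat.card (T.Q ((T.portPerm i.bodd ^ m) y).1) ≤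
      Nat.card (T.Q i) + Nat.card (T.Q (i + 1)) := by
    rcases glue_cases i.bodd ((T.portPerm i.bodd ^ m) y) with h | ⟨j, w, -, h, h'⟩
    · rw [← h, hglue]
      simp [y]
    · rw [hglue] at h'
      obtain rfl : i = j := congrArg Sigma.fst h'
      rw [h]
      simp
  have hreach (m : ℕ) : T.Reach (m * (1 + (Nat.card (T.Q i) + Nat.card (T.Q (i + 1))))) y
      ((T.portPerm i.bodd ^ m) y) := by
    induction m with
    | zero => exact .refl _ _
    | succ m ih =>
      rw [Nat.succ_mul]
      have hc := hcard (m + 1)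
      rw [pow_succ', Equiv.Perm.mul_apply] at hc ⊢
      exact ih.trans ((reach_portPerm _ _).mono (by omega))
  obtain ⟨m, hm, h⟩ := exists_portPerm_pow ((glue_exit i (T.parent i v)).trans (glue_entry i v).symm)
  rw [← h]
  exact (hreach m).mono (Nat.mul_le_mul_right _ hm)

theorem reach_child (i : ℕ) (v : Fin (T.f (i + 1))) :
    T.Reach (2 * (T.d + 2) * (Nat.card (T.Q i) + Nat.card (T.Q (i + 1))))
      ⟨i, (T.parent i v, 1)⟩ ⟨i + 1, (v, 1)⟩ := by
  refine ((reach_exit i _).trans (reach_entry i v)).mono ?_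
  have : 0 < Nat.card (T.Q i) := Nat.card_pos
  nlinarith [Nat.zero_le (Nat.card (T.Q (i + 1)))]

theorem reach_of_root (h0 : T.f 0 = 1) (v₀ : Fin (T.f 0)) (i : ℕ) (v : Fin (T.f i)) :
    T.Reach (2 * (T.d + 2) *
        ∑ j ∈ Finset.range i, (Nat.card (T.Q j) + Nat.card (T.Q (j + 1))))
      ⟨0, (v₀, 1)⟩ ⟨i, (v, 1)⟩ := by
  induction i with
  | zero =>
    have : v₀ = v := Fin.ext (by omega)
    rw [this]
    exact .refl _ _
  | succ i ih =>
    rw [Finset.sum_range_succ, mul_add]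
    exact (ih _).trans (reach_child i v)

end Reach

section Growth

theorem reach_of_root_of_sum_le
    (hQ : ∀ n, ∑ i ∈ Finset.range (n + 1), Nat.card (T.Q i) ≤ 2 * n + 1)
    (h0 : T.f 0 = 1) (v₀ : Fin (T.f 0)) (i : ℕ) (v : Fin (T.f i)) :
    T.Reach (12 * (T.d + 2) * i) ⟨0, (v₀, 1)⟩ ⟨i, (v, 1)⟩ := by
  refine (reach_of_root h0 v₀ i v).mono ?_
  have h : ∑ j ∈ Finset.range i, (Nat.card (T.Q j) + Nat.card (T.Q (j + 1))) ≤ 6 * i := by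
    rcases Nat.eq_zero_or_pos i with rfl | hi
    · simp
    have h1 := hQ i
    have h2 := Finset.sum_range_succ (fun j => Nat.card (T.Q j)) i
    have h3 := Finset.sum_range_succ' (fun j => Nat.card (T.Q j)) i
    rw [Finset.sum_add_distrib]
    omega
  nlinarith [Nat.mul_le_mul_left (2 * (T.d + 2)) h]

theorem sum_le_ncard_orbit
    (hQ : ∀ n, ∑ i ∈ Finset.range (n + 1), Nat.card (T.Q i) ≤ 2 * n + 1)
    (h0 : T.f 0 = 1) (v₀ : Fin (T.f 0)) (n : ℕ) :
    ∑ i ∈ Finset.range (n + 1), T.f i ≤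
      ((fun g => T.action g ⟨0, (v₀, 1)⟩) '' wordBall freeBasis (12 * (T.d + 2) * n)).ncard := by
  let s : Finset (Σ i, Fin (T.f i)) := (Finset.range (n + 1)).sigma fun _ => Finset.univ
  have hs : (s : Set (Σ i, Fin (T.f i))).ncard = ∑ i ∈ Finset.range (n + 1), T.f i := by
    rw [Set.ncard_coe_finset]
    simp [s]
  rw [← hs]
  refine Set.ncard_le_ncard_of_injOn (fun y => (⟨y.1, (y.2, 1)⟩ : T.Point)) ?_ ?_ ?_
  · rintro ⟨i, v⟩ hi
    have hi : i ≤ n := by simpa [s, Nat.lt_succ_iff] using hi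
    exact (reach_of_root_of_sum_le hQ h0 v₀ i v).mono (Nat.mul_le_mul_left _ hi)
  · rintro ⟨i, v⟩ - ⟨j, w⟩ - h
    obtain rfl : i = j := congrArg Sigma.fst h
    simpa using h
  · exact (finite_wordBall (by simp) _).image _

theorem ncard_orbit_le (v₀ : Fin (T.f 0)) (n : ℕ) :
    ((fun g => T.action g ⟨0, (v₀, 1)⟩) '' wordBall freeBasis n).ncard ≤
      ∑ i ∈ Finset.range (n + 1), T.f i * Nat.card (T.Q i) := by
  have := fun i => Fintype.ofFinite (T.Q i)
  let s : Finset T.Point := (Finset.range (n + 1)).sigma fun _ => Finset.univ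
  have hs : (s : Set T.Point).ncard = ∑ i ∈ Finset.range (n + 1), T.f i * Nat.card (T.Q i) := by
    rw [Set.ncard_coe_finset]
    simp [s, Nat.card_eq_fintype_card]
  rw [← hs]
  refine Set.ncard_le_ncard ?_ (Finset.finite_toSet s)
  rintro _ ⟨g, hg, rfl⟩
  have := action_level_le hg (⟨0, (v₀, 1)⟩ : T.Point)
  simp only [s, Finset.coe_sigma, Set.mem_sigma_iff, Finset.coe_range, Set.mem_Iio]
  simp only [zero_add] at this
  exact ⟨by omega, by simp⟩

end Growth

theorem essential_comap_stabilizer (o : T.Point)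
    (h : ∀ w : FreeGroup Bool, ∃ m, 0 < m ∧ T.action (w ^ m) o = o) :
    Essential ((MulAction.stabilizer (Equiv.Perm T.Point) o).comap T.action) := by
  intro K hK
  obtain ⟨w, hw, hw1⟩ := K.bot_or_exists_ne_one.resolve_left hK
  obtain ⟨m, hm, hmo⟩ := h w
  intro hbot
  have hmem : w ^ m ∈ (MulAction.stabilizer (Equiv.Perm T.Point) o).comap T.action ⊓ K :=
    ⟨hmo, pow_mem hw m⟩
  rw [hbot, Subgroup.mem_bot, pow_eq_one_iff_left hm.ne'] at hmem
  exact hw1 hmem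

end GroupTree

/-- Any word dies in a large cyclic quotient of the free group in which some power of a letter is
far from the identity. -/
theorem exists_cyclic_quotient (w : FreeGroup Bool) (M : ℕ) :
    ∃ (q : ℕ) (φ : FreeGroup Bool →* Multiplicative (ZMod (q + 1)))
      (h : Multiplicative (ZMod (q + 1))),
      (∃ x, h ∈ Subgroup.zpowers (φ (FreeGroup.of x))) ∧ φ w = 1 ∧
        ∀ g ∈ wordBall freeBasis M, φ g ≠ h := by
  have hfin : (wordBall freeBasis M).Finite := finite_wordBall (by simp) M
  obtain ⟨p, hp, hprime⟩ := Nat.exists_infinite_primes ((wordBall freeBasis M).ncard + 1)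
  obtain ⟨q, rfl⟩ := Nat.exists_eq_succ_of_ne_zero hprime.ne_zero
  have : Fact (q + 1).Prime := ⟨hprime⟩
  let A := Multiplicative (ZMod (q + 1))
  have hA : Nat.card A = q + 1 := Nat.card_zmod _
  obtain ⟨u, u', hne, hu⟩ := Fintype.exists_ne_map_eq_of_card_lt
    (fun u : Bool → A => FreeGroup.lift u w) (by
      rw [Fintype.card_fun, Fintype.card_bool, ← Nat.card_eq_fintype_card, hA]
      have := hprime.two_le
      simp only [Nat.succ_eq_add_one] at this
      nlinarith)
  obtain ⟨x, hx⟩ := Function.ne_iff.1 hne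
  let φ : FreeGroup Bool →* A := FreeGroup.lift u / FreeGroup.lift u'
  obtain ⟨h, hh⟩ : ∃ h, h ∉ φ '' wordBall freeBasis M := by
    by_contra! hall
    have h1 := Set.ncard_image_le (f := φ) hfin
    rw [Set.eq_univ_of_forall hall, Set.ncard_univ, hA] at h1
    simp only [Nat.succ_eq_add_one] at hp
    omega
  refine ⟨q, φ, h, ⟨x, mem_zpowers_of_prime_card hA ?_⟩, ?_, fun g hg hgh => hh ⟨g, hg, hgh⟩⟩
  · simpa [φ, div_eq_one] using hx
  · simpa [φ, div_eq_one] using hu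

theorem exists_ge_forall_le (f : ℕ → ℕ) (n : ℕ) : ∃ N ≥ n, ∀ j ≥ n, f N ≤ f j := by
  obtain ⟨N, hN, h⟩ := exists_minimalFor_of_wellFoundedLT (fun j => n ≤ j) f ⟨n, le_rfl⟩
  exact ⟨N, hN, fun j hj => (le_total (f N) (f j)).elim id fun hle => h hj hle⟩

/-- Spreading the values of `q` along a sufficiently sparse sequence. -/
theorem sum_range_le_of_sparse {q q' N : ℕ → ℕ} (hN : StrictMono N)
    (hqN : ∀ k, ∑ j ∈ Finset.range (k + 1), q j ≤ N k) (hq' : ∀ k, q' (N k) = q k)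
    (hq'0 : ∀ i, (∀ k, N k ≠ i) → q' i = 0) (n : ℕ) :
    ∑ i ∈ Finset.range (n + 1), q' i ≤ n := by
  let s : Finset ℕ := (Finset.range (n + 1)).filter fun k => N k ≤ n
  have hs : ∑ i ∈ Finset.range (n + 1), q' i = ∑ k ∈ s, q k := by
    rw [← Finset.sum_congr rfl fun k (_ : k ∈ s) => hq' k,
      ← Finset.sum_image (f := q') hN.injective.injOn]
    symm
    refine Finset.sum_subset ?_ fun i hi his => hq'0 i ?_
    · intro i hi
      obtain ⟨k, hk, rfl⟩ := Finset.mem_image.1 hi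
      have := (Finset.mem_filter.1 hk).2
      simp only [Finset.mem_range]
      omega
    · rintro k rfl
      refine his (Finset.mem_image_of_mem N (Finset.mem_filter.2 ⟨?_, ?_⟩)) <;>
        have := hN.le_apply (x := k) <;> simp only [Finset.mem_range] at hi ⊢ <;> omega
  rw [hs]
  rcases s.eq_empty_or_nonempty with h | h
  · simp [h]
  · refine le_trans (Finset.sum_le_sum_of_subset fun k hk => ?_)
      ((hqN (s.max' h)).trans (Finset.mem_filter.1 (s.max'_mem h)).2)
    exact Finset.mem_range_succ_iff.2 (s.le_max' k hk)

theorem sum_mul_succ_le {f q : ℕ → ℕ} (hf : ∀ i, q i ≠ 0 → ∀ j ≥ i, f i ≤ f j) (n : ℕ)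
    (hq : ∑ i ∈ Finset.range (n + 1), q i ≤ n) :
    ∑ i ∈ Finset.range (n + 1), f i * (q i + 1) ≤ ∑ i ∈ Finset.range (2 * n + 1), f i := by
  obtain ⟨N, hN, hmin⟩ := exists_ge_forall_le f n
  have h1 : ∑ i ∈ Finset.range (n + 1), f i * q i ≤ f N * n := by
    refine le_trans (Finset.sum_le_sum (g := fun i => f N * q i) fun i hi => ?_) ?_
    · by_cases h : q i = 0
      · simp [h]
      · have := Finset.mem_range.1 hi
        exact Nat.mul_le_mul_right _ (hf i h N (by omega))
    · rw [← Finset.mul_sum]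
      exact Nat.mul_le_mul_left _ hq
  have h2 : f N * n ≤ ∑ i ∈ Finset.Ico (n + 1) (2 * n + 1), f i := by
    have := Finset.card_nsmul_le_sum (Finset.Ico (n + 1) (2 * n + 1)) f (f N) fun i hi =>
      hmin i (by have := Finset.mem_Ico.1 hi; omega)
    rw [Nat.card_Ico, show 2 * n + 1 - (n + 1) = n by omega, smul_eq_mul, mul_comm] at this
    exact this
  rw [← Finset.sum_range_add_sum_Ico f (show n + 1 ≤ 2 * n + 1 by omega)]
  simp only [mul_add, mul_one, Finset.sum_add_distrib]
  omega

/-- A tree of groups with prescribed level sizes in which every word has a finite orbit at the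
root, and whose groups contribute negligibly to the growth. -/
theorem exists_groupTree (f : ℕ → ℕ) (d : ℕ) (hd : ∀ i, f (i + 1) ≤ d * f i) :
    ∃ T : GroupTree, T.f = f ∧ T.d = d ∧
      (∀ n, ∑ i ∈ Finset.range (n + 1), Nat.card (T.Q i) ≤ 2 * n + 1) ∧
      (∀ n, ∑ i ∈ Finset.range (n + 1), f i * Nat.card (T.Q i) ≤
        ∑ i ∈ Finset.range (2 * n + 1), f i) ∧
      ∀ (v₀ : Fin (T.f 0)) (w : FreeGroup Bool),
        ∃ m, 0 < m ∧ T.action (w ^ m) ⟨0, (v₀, 1)⟩ = ⟨0, (v₀, 1)⟩ := by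
  obtain ⟨e, he⟩ := exists_surjective_nat (FreeGroup Bool)
  choose r hr using fun k => exists_mem_wordBall closure_freeBasis (e k)
  choose q φ h hx hφ hfar using fun k => exists_cyclic_quotient (e k) (2 * r k)
  obtain ⟨N, hN, hNP⟩ := Filter.extraction_forall_of_frequently
    (P := fun k N => (∀ j ≥ N, f N ≤ f j) ∧ ∑ j ∈ Finset.range (k + 1), q j ≤ N) fun k => by
      rw [Filter.frequently_atTop]
      intro a
      obtain ⟨b, hb, hmin⟩ := exists_ge_forall_le f (max a (∑ j ∈ Finset.range (k + 1), q j))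
      exact ⟨b, (le_max_left _ _).trans hb, fun j hj => hmin j (hb.trans hj),
        (le_max_right _ _).trans hb⟩
  have hlevel (i : ℕ) : ∃ (q' : ℕ) (φ' : FreeGroup Bool →* Multiplicative (ZMod (q' + 1)))
      (h' : Multiplicative (ZMod (q' + 1))),
      (∃ x, h' ∈ Subgroup.zpowers (φ' (FreeGroup.of x))) ∧
      (∀ k, N k = i → q' = q k ∧ φ' (e k) = 1 ∧
        ∀ g ∈ wordBall freeBasis (2 * r k), φ' g ≠ h') ∧ ((∀ k, N k ≠ i) → q' = 0) := by
    by_cases hi : ∃ k, N k = i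
    · obtain ⟨k, rfl⟩ := hi
      refine ⟨q k, φ k, h k, hx k, fun j hj => ?_, fun hne => absurd rfl (hne k)⟩
      obtain rfl := hN.injective hj
      exact ⟨rfl, hφ j, hfar j⟩
    · push Not at hi
      exact ⟨0, 1, 1, ⟨true, one_mem _⟩, fun k hk => absurd hk (hi k), fun _ => rfl⟩
  choose q' φ' h' hx' hbar hzero using hlevel
  let T : GroupTree :=
    { f := f, d := d, f_succ_le := hd, Q := fun i => Multiplicative (ZMod (q' i + 1))
      φ := φ', exit := h', exit_mem := hx' }
  have hcard (i : ℕ) : Nat.card (T.Q i) = q' i + 1 := Nat.card_zmod (q' i + 1)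
  have hsum := sum_range_le_of_sparse hN (fun k => (hNP k).2) (fun k => (hbar _ k rfl).1) hzero
  refine ⟨T, rfl, rfl, fun n => ?_, fun n => ?_, fun v₀ w => ?_⟩
  · have := hsum n
    simp only [hcard, Finset.sum_add_distrib, Finset.sum_const, Finset.card_range, smul_eq_mul]
    omega
  · simp only [hcard]
    refine sum_mul_succ_le (fun i hi => ?_) n (hsum n)
    obtain ⟨k, rfl⟩ : ∃ k, N k = i := by
      by_contra! hne
      exact hi (hzero i hne)
    exact (hNP k).1
  · obtain ⟨k, rfl⟩ := he w
    obtain ⟨-, h1, h2⟩ := hbar _ k rfl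
    refine GroupTree.exists_pow_action_eq_self (hr k) h1 h2 ?_
    rcases Nat.eq_zero_or_pos (N k) with h0 | h0
    · exact .inr ⟨h0.symm, 1, one_mem_wordBall 0, (map_one _).symm⟩
    · exact .inl h0

/-- Every function `α(n) = Σ_{i≤n} f_i` with `f_0 = 1`, the support of `f` an initial
segment, and `f_{i+1} ≤ d·f_i`, is (up to equivalence) the cogrowth function of an
essential subgroup of the free group of rank two (of infinite index when `α` is
unbounded). -/
theorem exists_essential_subgroup_with_cogrowth (f : ℕ → ℕ) (h0 : f 0 = 1)
    (hsupp : ∀ i j : ℕ, i ≤ j → f j ≠ 0 → f i ≠ 0)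
    (hd : ∃ d : ℕ, 0 < d ∧ ∀ i, f (i + 1) ≤ d * f i)
    (α : ℕ → ℕ) (hα : ∀ n, α n = ∑ i ∈ Finset.range (n + 1), f i) :
    ∃ H : Subgroup (FreeGroup Bool), Essential H ∧
      ((¬ ∃ B : ℕ, ∀ n, α n ≤ B) → H.index = 0) ∧
      ∃ C : ℕ, 0 < C ∧ ∀ n,
        cogrowth {FreeGroup.of true, FreeGroup.of false} H n ≤ α (C * n) ∧
        α n ≤ cogrowth {FreeGroup.of true, FreeGroup.of false} H (C * n) := by
  obtain ⟨d, -, hd⟩ := hd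
  obtain ⟨T, rfl, rfl, hQ, hfQ, hfin⟩ := exists_groupTree f d hd
  let v₀ : Fin (T.f 0) := ⟨0, by omega⟩
  let o : T.Point := ⟨0, (v₀, 1)⟩
  let H := (MulAction.stabilizer (Equiv.Perm T.Point) o).comap T.action
  have hlower (n : ℕ) : α n ≤ cogrowth freeBasis H (12 * (T.d + 2) * n) := by
    rw [hα, cogrowth_comap_stabilizer]
    exact GroupTree.sum_le_ncard_orbit hQ h0 v₀ n
  refine ⟨H, GroupTree.essential_comap_stabilizer o (hfin v₀), fun hunb => ?_,
    12 * (T.d + 2), by positivity, fun n => ⟨?_, hlower n⟩⟩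
  · by_contra hindex
    have : H.FiniteIndex := ⟨hindex⟩
    have : Finite (Quotient (QuotientGroup.rightRel H)) :=
      .of_equiv _ (QuotientGroup.quotientRightRelEquivQuotientLeftRel H).symm
    exact hunb ⟨Nat.card (Quotient (QuotientGroup.rightRel H)), fun n =>
      (hlower n).trans (Set.ncard_le_card _)⟩
  · rw [cogrowth_comap_stabilizer, hα]
    refine (GroupTree.ncard_orbit_le v₀ n).trans ((hfQ n).trans ?_)
    exact Finset.sum_le_sum_of_subset (Finset.range_mono (by nlinarith))
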